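/- arXiv:1112.3820 — 2 statements merged into one kernel-verified Lean document; each statement's English description precedes it below -/
import Mathlib

section
/- Let f ∈ ℤ[x] be a nonzero polynomial of degree r ≥ 1. Then there exist constants B and C depending only on f such that Σ_{n ≤ N} Σ_{d | f(n), d ≤ N} 1 ≪ N (log N)^B, using that the number of solutions x mod d to f(x) ≡ 0 (mod d) is at most (deg f)^{ω(d)} for squarefree d; consequently, for every A > 0 there is a constant C = C(A, f) such that the number of integers 1 ≤ n ≤ N with ω(f(n)) ≥ C·log log N is O_A(N (log N)^{−A}). -/
/-- Classification of the solutions of `d ∣ f x` by tuples. -/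
lemma aux_tuple (r : ℕ) : ∀ (f : Polynomial ℤ), f.natDegree = r → f ≠ 0 → ∀ d : ℕ,
    ∃ (e : ℤ → ℕ) (t : ℤ → Fin r → ℕ), ∀ x : ℤ, 0 < d → (d : ℤ) ∣ f.eval x →
      (e x ∣ f.leadingCoeff.natAbs ∧ e x * ∏ i, t x i = d ∧
        ∀ y : ℤ, (d : ℤ) ∣ f.eval y → e x = e y → t x = t y → ∀ i, (t x i : ℤ) ∣ x - y) := by
  induction r with
  | zero =>
    intro f hf h0 d
    refine ⟨fun _ => d, fun _ _ => 1, ?_⟩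
    intro x _ hx
    rw [Polynomial.eq_C_of_natDegree_eq_zero hf] at hx ⊢
    simp only [Polynomial.eval_C] at hx
    refine ⟨?_, by simp, fun y _ _ _ i => i.elim0⟩
    rw [Polynomial.leadingCoeff_C]
    exact Int.natCast_dvd.mp hx
  | succ r ih =>
    intro f hf h0 d
    by_cases hex : ∃ x0 : ℤ, (d : ℤ) ∣ f.eval x0
    swap
    · push Not at hex
      exact ⟨fun _ => 1, fun _ _ => 1, fun x _ hx => absurd hx (hex x)⟩
    obtain ⟨x0, hx0⟩ := hex
    set g := f /ₘ (Polynomial.X - Polynomial.C x0) with hg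
    have hmon := Polynomial.monic_X_sub_C x0
    have hfac : ∀ x, f.eval x = f.eval x0 + (x - x0) * g.eval x := by
      intro x
      have h := Polynomial.modByMonic_add_div f (Polynomial.X - Polynomial.C x0)
      rw [Polynomial.modByMonic_X_sub_C_eq_C_eval] at h
      have := congrArg (Polynomial.eval x) h
      rw [Polynomial.eval_add, Polynomial.eval_mul, Polynomial.eval_C, Polynomial.eval_sub,
        Polynomial.eval_X, Polynomial.eval_C] at this
      rw [← this]
    have hgd : g.natDegree = r := by
      rw [hg, Polynomial.natDegree_divByMonic _ hmon, hf, Polynomial.natDegree_X_sub_C]; rfl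
    have hgl : g.leadingCoeff = f.leadingCoeff := by
      apply Polynomial.leadingCoeff_divByMonic_of_monic hmon
      rw [Polynomial.degree_X_sub_C, Polynomial.degree_eq_natDegree h0, hf]
      norm_cast; omega
    have hg0 : g ≠ 0 := by
      intro h; rw [h, Polynomial.leadingCoeff_zero] at hgl
      exact h0 (Polynomial.leadingCoeff_eq_zero.mp hgl.symm)
    choose E T hET using ih g hgd hg0
    set d1 : ℤ → ℕ := fun x => Int.gcd d (x - x0) with hd1
    have hd1d : ∀ x, d1 x ∣ d := fun x => by
      exact_mod_cast Int.gcd_dvd_left (d : ℤ) (x - x0)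
    have hd2 : ∀ x, 0 < d → (d : ℤ) ∣ f.eval x → ((d / d1 x : ℕ) : ℤ) ∣ g.eval x := by
      intro x hd hx
      rw [hfac x] at hx
      have h1 : (d : ℤ) ∣ (x - x0) * g.eval x := (dvd_add_right hx0).mp hx
      have h2 : (d : ℤ) ∣ (d1 x : ℤ) * g.eval x := by
        have := dvd_gcd_mul_of_dvd_mul h1
        rwa [← Int.coe_gcd] at this
      have hp : (d1 x : ℤ) ≠ 0 := by
        exact_mod_cast (Nat.pos_of_dvd_of_pos (hd1d x) hd).ne'
      have h3 : (d : ℤ) = d1 x * ((d / d1 x : ℕ) : ℤ) := by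
        exact_mod_cast (Nat.mul_div_cancel' (hd1d x)).symm
      rw [h3] at h2
      exact (mul_dvd_mul_iff_left hp).mp h2
    refine ⟨fun x => E (d / d1 x) x, fun x => Fin.cons (d1 x) (T (d / d1 x) x), ?_⟩
    intro x hd hx
    have hpos : 0 < d / d1 x :=
      Nat.div_pos (Nat.le_of_dvd hd (hd1d x)) (Nat.pos_of_dvd_of_pos (hd1d x) hd)
    obtain ⟨h1, h2, h3⟩ := hET _ x hpos (hd2 x hd hx)
    refine ⟨hgl ▸ h1, ?_, ?_⟩
    · simp only [Fin.prod_univ_succ, Fin.cons_zero, Fin.cons_succ]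
      rw [mul_left_comm, h2, Nat.mul_div_cancel' (hd1d x)]
    · intro y hy he ht i
      have hc : d1 x = d1 y := by simpa using congrFun ht 0
      refine Fin.cases ?_ (fun j => ?_) i
      · simp only [Fin.cons_zero]
        have a1 : (d1 x : ℤ) ∣ x - x0 := Int.gcd_dvd_right _ _
        have a2 : (d1 x : ℤ) ∣ y - x0 := hc ▸ Int.gcd_dvd_right _ _
        have := dvd_sub a1 a2
        simpa using this
      · simp only [Fin.cons_succ]
        have hyy := hd2 y hd hy
        have ht' : T (d / d1 x) x = T (d / d1 y) y := by
          funext k; simpa using congrFun ht k.succ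
        simp only at he
        rw [← hc] at he ht' hyy
        exact h3 y hyy he ht' j

/-- Integers of `[1,N]` pairwise congruent modulo `m`. -/
lemma aux_class (N m : ℕ) (hm : 1 ≤ m) (hmN : m ≤ N) (S : Finset ℕ) (hS : S ⊆ Finset.Icc 1 N)
    (h : ∀ x ∈ S, ∀ y ∈ S, (m : ℤ) ∣ (x : ℤ) - y) : (S.card : ℝ) ≤ 2 * N / m := by
  have h1 : S.card ≤ (Finset.range (N / m + 1)).card := by
    apply Finset.card_le_card_of_injOn (fun x => x / m)
    · intro x hx
      have := Finset.mem_Icc.mp (hS hx)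
      simp only [Finset.coe_range, Set.mem_Iio]
      exact Nat.lt_succ_of_le (Nat.div_le_div_right this.2)
    · intro x hx y hy hxy
      have hmod : y % m = x % m := (Nat.modEq_iff_dvd.mpr (h x hx y hy))
      simp only at hxy
      rw [← Nat.div_add_mod x m, ← Nat.div_add_mod y m, hxy, hmod]
  rw [Finset.card_range] at h1
  have hm0 : (0:ℝ) < m := by exact_mod_cast hm
  rw [le_div_iff₀ hm0]
  have : S.card * m ≤ 2 * N := by
    calc S.card * m ≤ (N / m + 1) * m := Nat.mul_le_mul_right _ h1
      _ = N / m * m + m := by ring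
      _ ≤ N + N := Nat.add_le_add (Nat.div_mul_le_self N m) hmN
      _ = 2 * N := by ring
  exact_mod_cast this

lemma aux_tau_mul (a b : ℕ) : (a * b).divisors.card ≤ a.divisors.card * b.divisors.card := by
  classical
  rw [Nat.divisors_mul]
  exact Finset.card_mul_le

/-- Moments of the divisor function. -/
lemma aux_tau (N : ℕ) (k : ℕ) :
    ∑ m ∈ Finset.Icc 1 N, ((m.divisors.card : ℝ)) ^ k / m ≤
      (∑ m ∈ Finset.Icc 1 N, (1 : ℝ) / m) ^ (2 ^ k) := by
  induction k with
  | zero => simp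
  | succ k ih =>
    have key : ∑ m ∈ Finset.Icc 1 N, ((m.divisors.card : ℝ)) ^ (k + 1) / m ≤
        (∑ m ∈ Finset.Icc 1 N, ((m.divisors.card : ℝ)) ^ k / m) *
        (∑ m ∈ Finset.Icc 1 N, ((m.divisors.card : ℝ)) ^ k / m) := by
      rw [Finset.sum_mul_sum, ← Finset.sum_product']
      have e1 : ∀ m ∈ Finset.Icc 1 N, ((m.divisors.card : ℝ)) ^ (k + 1) / m =
          ∑ p ∈ m.divisorsAntidiagonal, ((m.divisors.card : ℝ)) ^ k / m := by
        intro m hm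
        rw [Finset.sum_const, ← Nat.map_div_right_divisors, Finset.card_map, nsmul_eq_mul]
        ring
      rw [Finset.sum_congr rfl e1, Finset.sum_sigma']
      have : ∑ x ∈ (Finset.Icc 1 N).sigma (fun m => m.divisorsAntidiagonal),
          ((x.1.divisors.card : ℝ)) ^ k / x.1 ≤
          ∑ x ∈ (Finset.Icc 1 N).sigma (fun m => m.divisorsAntidiagonal),
          ((x.2.1.divisors.card : ℝ)) ^ k / x.2.1 * (((x.2.2.divisors.card : ℝ)) ^ k / x.2.2) := by
        apply Finset.sum_le_sum
        rintro ⟨m, a, b⟩ hx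
        simp only [Finset.mem_sigma, Nat.mem_divisorsAntidiagonal] at hx
        obtain ⟨hm, rfl, h0⟩ := hx
        simp only
        rw [div_mul_div_comm, ← mul_pow]
        push_cast
        gcongr
        exact_mod_cast aux_tau_mul a b
      refine this.trans ?_
      rw [← Finset.sum_image (f := fun p : ℕ × ℕ => ((p.1.divisors.card : ℝ)) ^ k / p.1 *
        (((p.2.divisors.card : ℝ)) ^ k / p.2)) (g := fun x : (_ : ℕ) × ℕ × ℕ => x.2)]
      · apply Finset.sum_le_sum_of_subset_of_nonneg
        · intro p hp
          simp only [Finset.mem_image, Finset.mem_sigma, Nat.mem_divisorsAntidiagonal,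
            Finset.mem_Icc] at hp
          obtain ⟨⟨m, a, b⟩, ⟨⟨h1, h2⟩, h3, h4⟩, rfl⟩ := hp
          simp only at *
          subst h3
          have ha : a ≠ 0 := fun h => by simp [h] at h4
          have hb : b ≠ 0 := fun h => by simp [h] at h4
          simp only [Finset.mem_product, Finset.mem_Icc]
          have := Nat.le_mul_of_pos_right a (Nat.pos_of_ne_zero hb)
          have := Nat.le_mul_of_pos_left b (Nat.pos_of_ne_zero ha)
          omega
        · intros; positivity
      · rintro ⟨m, a, b⟩ hx ⟨m', a', b'⟩ hx' h
        simp only [Finset.coe_sigma, Set.mem_sigma_iff, Finset.mem_coe,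
          Nat.mem_divisorsAntidiagonal] at hx hx' h
        obtain ⟨_, rfl, _⟩ := hx
        obtain ⟨_, rfl, _⟩ := hx'
        simp at h
        obtain ⟨rfl, rfl⟩ := h
        rfl
    refine key.trans ?_
    rw [pow_succ, pow_mul, sq]
    gcongr

/-- First part in a convenient form. -/
lemma aux_part1 (f : Polynomial ℤ) (h0 : f ≠ 0) (N : ℕ) :
    (∑ n ∈ Finset.Icc 1 N,
          ((((f.eval (n : ℤ)).natAbs.divisors.filter (fun d => d ≤ N)).card : ℝ)))
        ≤ 2 * f.leadingCoeff.natAbs.divisors.card * N *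
          (∑ m ∈ Finset.Icc 1 N, (1 : ℝ) / m) ^ (2 ^ f.natDegree) := by
  classical
  choose E T hET using aux_tuple f.natDegree f rfl h0
  set P : Finset ((_ : ℕ) × ℕ) := (Finset.Icc 1 N).sigma
    (fun n => (f.eval (n : ℤ)).natAbs.divisors.filter (fun d => d ≤ N)) with hP
  set Q : Finset ((_ : ℕ) × (ℕ × (Fin f.natDegree → ℕ))) := (Finset.Icc 1 N).sigma
    (fun m => f.leadingCoeff.natAbs.divisors ×ˢ Fintype.piFinset (fun _ => m.divisors)) with hQ
  let φ : (_ : ℕ) × ℕ → (_ : ℕ) × (ℕ × (Fin f.natDegree → ℕ)) := fun p =>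
    ⟨Finset.univ.lcm (T p.2 p.1), E p.2 p.1, T p.2 p.1⟩
  have hmemP : ∀ p ∈ P, p.1 ∈ Finset.Icc 1 N ∧ (p.2 : ℤ) ∣ f.eval (p.1 : ℤ) ∧ p.2 ≤ N ∧
      0 < p.2 := by
    intro p hp
    simp only [hP, Finset.mem_sigma, Finset.mem_filter] at hp
    exact ⟨hp.1, Int.natCast_dvd.mpr (Nat.dvd_of_mem_divisors hp.2.1), hp.2.2,
      Nat.pos_of_mem_divisors hp.2.1⟩
  have hmaps : ∀ p ∈ P, φ p ∈ Q := by
    intro p hp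
    obtain ⟨h1, h2, h3, h4⟩ := hmemP p hp
    obtain ⟨g1, g2, -⟩ := hET p.2 p.1 h4 h2
    have hl : Finset.univ.lcm (T p.2 p.1) ∣ p.2 :=
      (Finset.lcm_dvd fun i hi => (Finset.dvd_prod_of_mem _ hi)).trans (Dvd.intro_left _ g2)
    have hlpos := Nat.pos_of_dvd_of_pos hl h4
    simp only [hQ, φ, Finset.mem_sigma, Finset.mem_Icc, Finset.mem_product, Nat.mem_divisors,
      Fintype.mem_piFinset]
    refine ⟨⟨hlpos, (Nat.le_of_dvd h4 hl).trans h3⟩, ⟨g1, by simpa using h0⟩,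
      fun i => ⟨Finset.dvd_lcm (Finset.mem_univ i), hlpos.ne'⟩⟩
  have hcard : (∑ n ∈ Finset.Icc 1 N,
      ((((f.eval (n : ℤ)).natAbs.divisors.filter (fun d => d ≤ N)).card : ℝ))) = (P.card : ℝ) := by
    rw [hP, Finset.card_sigma]; push_cast; rfl
  rw [hcard, Finset.card_eq_sum_card_fiberwise hmaps]
  push_cast
  have hfib : ∀ q ∈ Q, ((P.filter (fun p => φ p = q)).card : ℝ) ≤ 2 * N / q.1 := by
    rintro ⟨m, e, t⟩ hq
    simp only [hQ, Finset.mem_sigma, Finset.mem_Icc] at hq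
    have hd : ∀ p ∈ P.filter (fun p => φ p = ⟨m, e, t⟩), p.2 = e * ∏ i, t i ∧
        E p.2 p.1 = e ∧ T p.2 p.1 = t ∧ Finset.univ.lcm t = m := by
      intro p hp
      rw [Finset.mem_filter] at hp
      obtain ⟨hp, hpe⟩ := hp
      obtain ⟨h1, h2, h3, h4⟩ := hmemP p hp
      obtain ⟨g1, g2, -⟩ := hET p.2 p.1 h4 h2
      simp only [φ, Sigma.mk.injEq, heq_eq_eq, Prod.mk.injEq] at hpe
      obtain ⟨k1, k2, k3⟩ := hpe
      rw [k2, k3] at g2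
      rw [k3] at k1
      exact ⟨g2.symm, k2, k3, k1⟩
    have hinj : Set.InjOn (fun p : (_ : ℕ) × ℕ => p.1)
        (P.filter (fun p => φ p = ⟨m, e, t⟩) : Finset _) := by
      rintro ⟨n, d⟩ hp ⟨n', d'⟩ hp' h
      have a := (hd _ hp).1
      have b := (hd _ hp').1
      simp only at a b h
      rw [h, a, b]
    rw [← Finset.card_image_of_injOn hinj]
    apply aux_class N m hq.1.1 hq.1.2
    · intro n hn
      obtain ⟨p, hp, rfl⟩ := Finset.mem_image.mp hn
      exact (hmemP p (Finset.mem_filter.mp hp).1).1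
    · intro x hx y hy
      obtain ⟨p, hp, rfl⟩ := Finset.mem_image.mp hx
      obtain ⟨p', hp', rfl⟩ := Finset.mem_image.mp hy
      obtain ⟨a1, a2, a3, a4⟩ := hd p hp
      obtain ⟨b1, b2, b3, -⟩ := hd p' hp'
      have hpp : p'.2 = p.2 := b1.trans a1.symm
      have c1 := (hmemP p (Finset.mem_filter.mp hp).1).2.1
      have c2 := (hmemP p' (Finset.mem_filter.mp hp').1).2.1
      rw [hpp] at b2 b3 c2
      have := (hET p.2 p.1 (hmemP p (Finset.mem_filter.mp hp).1).2.2.2 c1).2.2 p'.1 c2 (a2.trans b2.symm) (a3.trans b3.symm)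
      rw [a3] at this
      rw [Int.natCast_dvd, ← a4]
      exact Finset.lcm_dvd fun i _ => Int.natCast_dvd.mp (this i)
  refine (Finset.sum_le_sum hfib).trans ?_
  rw [hQ, Finset.sum_sigma]
  simp only [Finset.sum_const, Finset.card_product, Fintype.card_piFinset_const, nsmul_eq_mul]
  have := aux_tau N f.natDegree
  calc _ = 2 * (f.leadingCoeff.natAbs.divisors.card : ℝ) * N *
        ∑ m ∈ Finset.Icc 1 N, ((m.divisors.card : ℝ)) ^ f.natDegree / m := by
        rw [Finset.mul_sum]
        refine Finset.sum_congr rfl fun m _ => ?_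
        push_cast; ring
    _ ≤ _ := by gcongr

lemma aux_harm (N : ℕ) (hN : 3 ≤ N) :
    1 ≤ Real.log N ∧ ∑ m ∈ Finset.Icc 1 N, (1 : ℝ) / m ≤ 2 * Real.log N := by
  have h1 : 1 ≤ Real.log N := by
    rw [Real.le_log_iff_exp_le (by positivity)]
    have : (3:ℝ) ≤ N := by exact_mod_cast hN
    linarith [Real.exp_one_lt_d9]
  refine ⟨h1, ?_⟩
  have h := harmonic_le_one_add_log N
  rw [harmonic_eq_sum_Icc] at h
  push_cast at h
  simp only [one_div]
  linarith

lemma aux_part1' (f : Polynomial ℤ) (h0 : f ≠ 0) : ∃ K : ℝ, 0 < K ∧ ∀ N : ℕ, 3 ≤ N →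
      (∑ n ∈ Finset.Icc 1 N,
          ((((f.eval (n : ℤ)).natAbs.divisors.filter (fun d => d ≤ N)).card : ℝ)))
        ≤ K * N * (Real.log N) ^ (((2 ^ f.natDegree : ℕ) : ℝ)) := by
  have hc : 0 < f.leadingCoeff.natAbs.divisors.card := by
    rw [Finset.card_pos]; simpa using h0
  refine ⟨2 * f.leadingCoeff.natAbs.divisors.card * 2 ^ (2 ^ f.natDegree), by positivity, ?_⟩
  intro N hN
  obtain ⟨h1, h2⟩ := aux_harm N hN
  refine (aux_part1 f h0 N).trans ?_
  rw [Real.rpow_natCast]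
  calc _ ≤ 2 * (f.leadingCoeff.natAbs.divisors.card : ℝ) * N * (2 * Real.log N) ^ (2 ^ f.natDegree) := by
        gcongr
    _ = _ := by rw [mul_pow]; ring

lemma aux_subset (N k j : ℕ) : ∀ P : Finset ℕ, j * k ≤ P.card → (∏ p ∈ P, p) < N ^ j →
    (∀ p ∈ P, 0 < p) → ∃ Q ⊆ P, Q.card = k ∧ ∏ p ∈ Q, p ≤ N := by
  induction j with
  | zero =>
    intro P _ h hp
    have : 0 < ∏ p ∈ P, p := Finset.prod_pos hp
    simp at h; omega
  | succ j ih =>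
    intro P hc h hp
    obtain ⟨Q, hQ, hk⟩ := Finset.exists_subset_card_eq (show k ≤ P.card by nlinarith)
    by_cases hle : ∏ p ∈ Q, p ≤ N
    · exact ⟨Q, hQ, hk, hle⟩
    push Not at hle
    have hs := Finset.prod_sdiff (f := fun p : ℕ => p) hQ
    have hlt : ∏ p ∈ P \ Q, p < N ^ j := by
      by_contra hcon
      push Not at hcon
      have := Nat.mul_le_mul hcon hle.le
      rw [hs, ← pow_succ] at this
      omega
    obtain ⟨R, hR, h1, h2⟩ := ih (P \ Q) (by
      rw [Finset.card_sdiff_of_subset hQ, hk]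
      have : (j + 1) * k = j * k + k := by ring
      omega) hlt (fun p h => hp p (Finset.mem_sdiff.mp h).1)
    exact ⟨R, hR.trans Finset.sdiff_subset, h1, h2⟩

lemma aux_div_prod (Q : Finset ℕ) (h : ∀ p ∈ Q, p.Prime) :
    (∏ p ∈ Q, p).divisors.card = 2 ^ Q.card := by
  induction Q using Finset.induction_on with
  | empty => simp
  | insert a s ha ih =>
    have hpa := h a (Finset.mem_insert_self _ _)
    have hps : ∀ p ∈ s, p.Prime := fun p hp => h p (Finset.mem_insert_of_mem hp)
    rw [Finset.prod_insert ha, Nat.Coprime.card_divisors_mul, ih hps, Finset.card_insert_of_notMem ha,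
      hpa.divisors, Finset.card_pair hpa.one_lt.ne, pow_succ, mul_comm]
    apply Nat.Coprime.prod_right
    intro p hp
    exact (Nat.coprime_primes hpa (hps p hp)).mpr (fun e => ha (e ▸ hp))

lemma aux_size (f : Polynomial ℤ) : ∃ M : ℕ, ∀ N : ℕ, M < N → ∀ n ∈ Finset.Icc 1 N,
    (f.eval (n : ℤ)).natAbs < N ^ (f.natDegree + 1) := by
  refine ⟨∑ i ∈ Finset.range (f.natDegree + 1), (f.coeff i).natAbs, ?_⟩
  intro N hN n hn
  rw [Finset.mem_Icc] at hn
  rw [Polynomial.eval_eq_sum_range]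
  calc _ ≤ ∑ i ∈ Finset.range (f.natDegree + 1), (f.coeff i * (n : ℤ) ^ i).natAbs :=
        Int.natAbs_sum_le _ _
    _ ≤ ∑ i ∈ Finset.range (f.natDegree + 1), (f.coeff i).natAbs * N ^ f.natDegree := by
        refine Finset.sum_le_sum fun i hi => ?_
        rw [Int.natAbs_mul, Int.natAbs_pow, Int.natAbs_natCast]
        refine Nat.mul_le_mul_left _ ?_
        have : i ≤ f.natDegree := by simpa [Nat.lt_succ_iff] using hi
        calc n ^ i ≤ N ^ i := Nat.pow_le_pow_left hn.2 i
          _ ≤ _ := Nat.pow_le_pow_right (by omega) this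
    _ = (∑ i ∈ Finset.range (f.natDegree + 1), (f.coeff i).natAbs) * N ^ f.natDegree := by
        rw [Finset.sum_mul]
    _ < N * N ^ f.natDegree := Nat.mul_lt_mul_of_pos_right hN (Nat.pow_pos (by omega))
    _ = _ := by ring

lemma aux_part2 (f : Polynomial ℤ) (h0 : f ≠ 0) (A : ℝ) (hA : 0 < A) :
    ∃ C K : ℝ, 0 < C ∧ 0 < K ∧ ∀ N : ℕ, 3 ≤ N → ∀ S : Finset ℕ, S ⊆ Finset.Icc 1 N →
      (∀ n ∈ S, C * Real.log (Real.log N) ≤ ((f.eval (n : ℤ)).natAbs.primeFactors.card : ℝ)) →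
      (S.card : ℝ) ≤ K * N * (Real.log N) ^ (-A) := by
  obtain ⟨K, hK, h1⟩ := aux_part1' f h0
  obtain ⟨M, hM⟩ := aux_size f
  set B : ℝ := ((2 ^ f.natDegree : ℕ) : ℝ) with hB
  have hB0 : 0 ≤ B := by positivity
  have hl2 : 0 < Real.log 2 := Real.log_pos (by norm_num)
  have hev : ∀ᶠ N : ℕ in Filter.atTop, 1 ≤ Real.log (Real.log N) :=
    ((Real.tendsto_log_atTop.comp Real.tendsto_log_atTop).comp
      tendsto_natCast_atTop_atTop).eventually_ge_atTop 1
  obtain ⟨N1, hN1⟩ := Filter.eventually_atTop.mp hev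
  set N0 : ℕ := max (max N1 (M + 1)) 3 with hN0
  have hLN0 := (aux_harm N0 (by simp [hN0])).1
  set c : ℝ := (A + B) / Real.log 2 with hc
  have hc0 : 0 ≤ c := by positivity
  refine ⟨(f.natDegree + 1) * (c + 1), max K ((Real.log N0) ^ A), by positivity,
    lt_max_of_lt_left hK, ?_⟩
  intro N hN S hS hSw
  have hL := (aux_harm N hN).1
  have hLp : 0 < Real.log N := by linarith
  by_cases hNN : N < N0
  · have hcard : (S.card : ℝ) ≤ N := by
      have := Finset.card_le_card hS
      simp at this
      exact_mod_cast this
    have h2 : (1:ℝ) ≤ (Real.log N0) ^ A * (Real.log N) ^ (-A) := by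
      rw [Real.rpow_neg hLp.le, ← div_eq_mul_inv, one_le_div (by positivity)]
      apply Real.rpow_le_rpow hLp.le _ hA.le
      apply Real.log_le_log (by positivity)
      exact_mod_cast hNN.le
    calc (S.card : ℝ) ≤ N * 1 := by simpa using hcard
      _ ≤ N * ((Real.log N0) ^ A * (Real.log N) ^ (-A)) := by gcongr
      _ = (Real.log N0) ^ A * N * (Real.log N) ^ (-A) := by ring
      _ ≤ _ := by gcongr; exact le_max_right _ _
  · push Not at hNN
    have hLL : 1 ≤ Real.log (Real.log N) := hN1 N (by omega)
    set LL := Real.log (Real.log N) with hLLd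
    set k : ℕ := ⌈c * LL⌉₊ with hk
    have hk1 : c * LL ≤ k := Nat.le_ceil _
    have hk2 : (k : ℝ) ≤ (c + 1) * LL := by
      have := Nat.ceil_lt_add_one (show 0 ≤ c * LL by positivity)
      nlinarith
    have hpow : (Real.log N) ^ (A + B) ≤ (2:ℝ) ^ k := by
      rw [← Real.rpow_natCast, Real.rpow_def_of_pos hLp, Real.rpow_def_of_pos (by norm_num)]
      apply Real.exp_le_exp.mpr
      calc LL * (A + B) = Real.log 2 * (c * LL) := by rw [hc]; field_simp
        _ ≤ _ := by gcongr
    have hpt : ∀ n ∈ S, (Real.log N) ^ (A + B) ≤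
        ((((f.eval (n : ℤ)).natAbs.divisors.filter (fun d => d ≤ N)).card : ℝ)) := by
      intro n hn
      have hw := hSw n hn
      have hs := hM N (by omega) n (hS hn)
      set v := (f.eval (n : ℤ)).natAbs with hv
      have hcardk : (f.natDegree + 1) * k ≤ v.primeFactors.card := by
        have : (((f.natDegree + 1) * k : ℕ) : ℝ) ≤ (v.primeFactors.card : ℝ) := by
          push_cast
          calc ((f.natDegree : ℝ) + 1) * k ≤ (f.natDegree + 1) * ((c + 1) * LL) := by gcongr
            _ = (f.natDegree + 1) * (c + 1) * LL := by ring
            _ ≤ _ := hw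
        exact_mod_cast this
      have hv0 : v ≠ 0 := by
        intro h
        rw [h] at hw
        simp only [Nat.primeFactors_zero, Finset.card_empty, Nat.cast_zero] at hw
        have : 0 < ((f.natDegree : ℝ) + 1) * (c + 1) * LL := by positivity
        linarith
      have hple := Nat.le_of_dvd (Nat.pos_of_ne_zero hv0) (Nat.prod_primeFactors_dvd v)
      obtain ⟨Q, hQ, hQk, hQN⟩ := aux_subset N k _ v.primeFactors hcardk (hple.trans_lt hs)
        (fun p hp => (Nat.prime_of_mem_primeFactors hp).pos)
      have hd := aux_div_prod Q (fun p hp => Nat.prime_of_mem_primeFactors (hQ hp))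
      rw [hQk] at hd
      have hQpos : 0 < ∏ p ∈ Q, p :=
        Finset.prod_pos fun p hp => (Nat.prime_of_mem_primeFactors (hQ hp)).pos
      have hsub : (∏ p ∈ Q, p).divisors ⊆ v.divisors.filter (fun d => d ≤ N) := by
        intro d hdm
        rw [Nat.mem_divisors] at hdm
        rw [Finset.mem_filter, Nat.mem_divisors]
        refine ⟨⟨hdm.1.trans ((Finset.prod_dvd_prod_of_subset _ _ _ hQ).trans
          (Nat.prod_primeFactors_dvd v)), hv0⟩, (Nat.le_of_dvd hQpos hdm.1).trans hQN⟩
      have := Finset.card_le_card hsub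
      rw [hd] at this
      refine hpow.trans ?_
      exact_mod_cast this
    have hsum : S.card * (Real.log N) ^ (A + B) ≤ K * N * (Real.log N) ^ B := by
      refine le_trans ?_ (h1 N hN)
      rw [← nsmul_eq_mul, ← Finset.sum_const]
      refine (Finset.sum_le_sum hpt).trans ?_
      exact Finset.sum_le_sum_of_subset_of_nonneg hS (fun _ _ _ => by positivity)
    rw [Real.rpow_add hLp, ← mul_assoc] at hsum
    have h3 := le_of_mul_le_mul_right hsum (by positivity)
    rw [Real.rpow_neg hLp.le, ← div_eq_mul_inv, le_div_iff₀ (by positivity)]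
    refine h3.trans ?_
    gcongr
    exact le_max_left _ _

open Classical Polynomial in
/-- Divisor-sum bound `∑_{n ≤ N} #{d ≤ N : d ∣ f(n)} ≪ N (log N)^B`, and consequently for
every `A > 0` all but `O_A(N (log N)^{-A})` integers `n ≤ N` satisfy
`ω(f(n)) < C log log N` for a suitable `C = C(A, f)`. -/
theorem stmt_2 (f : Polynomial ℤ) (hf : 1 ≤ f.natDegree) :
    (∃ B K : ℝ, 0 < K ∧ ∀ N : ℕ, 3 ≤ N →
      (∑ n ∈ Finset.Icc 1 N,
          ((((f.eval (n : ℤ)).natAbs.divisors.filter (fun d => d ≤ N)).card : ℝ)))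
        ≤ K * N * (Real.log N) ^ B) ∧
    (∀ A : ℝ, 0 < A → ∃ C K : ℝ, 0 < C ∧ 0 < K ∧ ∀ N : ℕ, 3 ≤ N →
      ((((Finset.Icc 1 N).filter (fun n =>
          C * Real.log (Real.log N) ≤ ((f.eval (n : ℤ)).natAbs.primeFactors.card : ℝ))).card : ℝ))
        ≤ K * N * (Real.log N) ^ (-A)) := by
  have h0 : f ≠ 0 := by
    rintro rfl
    simp at hf
  refine ⟨?_, ?_⟩
  · obtain ⟨K, hK, h⟩ := aux_part1' f h0
    refine ⟨((2 ^ f.natDegree : ℕ) : ℝ), K, hK, fun N hN => ?_⟩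
    convert h N hN
  · intro A hA
    obtain ⟨C, K, hC, hK, h⟩ := aux_part2 f h0 A hA
    refine ⟨C, K, hC, hK, fun N hN => ?_⟩
    rw [show (do let a ← Finset.Icc 1 N; pure (a : ℤ) : Finset ℤ) =
      (Finset.Icc 1 N).image (fun a : ℕ => (a : ℤ)) by
        ext z
        simp [Finset.bind_def, Finset.pure_def, eq_comm],
      Finset.filter_image, Finset.card_image_of_injective _ Nat.cast_injective]
    exact h N hN _ (Finset.filter_subset _ _) (fun n hn => (Finset.mem_filter.mp hn).2)
end

section
/- For any N ≥ 2 and any ε > 0, Σ_{r ≤ N^{1/2−ε}} Σ_{χ mod r primitive} |Σ_{q ≤ N, q prime} χ(q)|² ≪_ε N²/(log N)², where χ ranges over primitive Dirichlet characters modulo r. -/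
namespace LS
open Finset ComplexConjugate

lemma bessel {X ι : Type*} [Fintype X] [Fintype ι] [DecidableEq ι] (v : ι → X → ℂ) (G : X → ℝ)
    (hG : ∀ x, 0 ≤ G x) (B : ℝ) (hB : 0 ≤ B)
    (hoff : ∀ i j, i ≠ j → ∑ x, (G x : ℂ) * (v i x * conj (v j x)) = 0)
    (hdiag : ∀ i, ∑ x, G x * ‖v i x‖ ^ 2 ≤ B) (P : Finset X) (hP : ∀ x ∈ P, 1 ≤ G x) :
    ∑ i, ‖∑ x ∈ P, v i x‖ ^ 2 ≤ B * #P := by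
  set S : ι → ℂ := fun i => ∑ x ∈ P, v i x with hS
  set U : X → ℂ := fun x => ∑ i, conj (S i) * v i x with hU
  set T : ℝ := ∑ i, ‖S i‖ ^ 2 with hT
  have hT0 : 0 ≤ T := by positivity
  have h1 : (T : ℂ) = ∑ x ∈ P, U x := by
    rw [hU, sum_comm, hT]
    push_cast
    refine sum_congr rfl fun i _ => ?_
    rw [← mul_sum, ← Complex.conj_mul']
  have h2 : T ^ 2 ≤ #P * ∑ x ∈ P, ‖U x‖ ^ 2 := by
    have : T ≤ ∑ x ∈ P, ‖U x‖ := by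
      calc T = ‖(T : ℂ)‖ := by rw [Complex.norm_real, Real.norm_of_nonneg hT0]
        _ ≤ _ := by rw [h1]; exact norm_sum_le _ _
    calc T ^ 2 ≤ (∑ x ∈ P, ‖U x‖) ^ 2 := by gcongr
      _ ≤ _ := sq_sum_le_card_mul_sum_sq
  have h3 : ∑ x ∈ P, ‖U x‖ ^ 2 ≤ ∑ x, G x * ‖U x‖ ^ 2 := by
    calc ∑ x ∈ P, ‖U x‖ ^ 2 ≤ ∑ x ∈ P, G x * ‖U x‖ ^ 2 := by
          refine sum_le_sum fun x hx => ?_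
          nlinarith [hP x hx, sq_nonneg ‖U x‖]
      _ ≤ _ := sum_le_sum_of_subset_of_nonneg (subset_univ _)
          fun x _ _ => mul_nonneg (hG x) (sq_nonneg _)
  have h4 : ∑ x, G x * ‖U x‖ ^ 2 = ∑ i, ‖S i‖ ^ 2 * ∑ x, G x * ‖v i x‖ ^ 2 := by
    have : ((∑ x, G x * ‖U x‖ ^ 2 : ℝ) : ℂ)
        = ((∑ i, ‖S i‖ ^ 2 * ∑ x, G x * ‖v i x‖ ^ 2 : ℝ) : ℂ) := by
      push_cast
      calc ∑ x, (G x : ℂ) * (‖U x‖ : ℂ) ^ 2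
          = ∑ x, ∑ i, ∑ j, (conj (S i) * S j) * ((G x : ℂ) * (v i x * conj (v j x))) := by
            refine sum_congr rfl fun x _ => ?_
            rw [← Complex.mul_conj', hU]
            simp only [map_sum, map_mul, Complex.conj_conj]
            rw [sum_mul_sum, mul_sum]
            refine sum_congr rfl fun i _ => ?_
            rw [mul_sum]
            refine sum_congr rfl fun j _ => ?_
            ring
        _ = ∑ i, ∑ j, (conj (S i) * S j) * ∑ x, ((G x : ℂ) * (v i x * conj (v j x))) := by
            rw [sum_comm]
            refine sum_congr rfl fun i _ => ?_
            rw [sum_comm]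
            refine sum_congr rfl fun j _ => ?_
            rw [← mul_sum]
        _ = _ := by
            refine sum_congr rfl fun i _ => ?_
            rw [sum_eq_single i]
            · rw [Complex.conj_mul']
              congr 1
              refine sum_congr rfl fun x _ => ?_
              rw [Complex.mul_conj']
            · intro j _ hj
              rw [hoff i j hj.symm, mul_zero]
            · simp
    exact_mod_cast this
  have h5 : ∑ i, ‖S i‖ ^ 2 * ∑ x, G x * ‖v i x‖ ^ 2 ≤ T * B := by
    rw [hT, sum_mul]
    exact sum_le_sum fun i _ => mul_le_mul_of_nonneg_left (hdiag i) (sq_nonneg _)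
  have h6 : T ^ 2 ≤ #P * (T * B) := by
    refine h2.trans ?_
    gcongr
    linarith
  change T ≤ _
  rcases hT0.eq_or_lt with h | h
  · rw [← h]; positivity
  · nlinarith

noncomputable def F (M K : ℕ) [NeZero M] (x : ZMod M) : ℝ :=
  ‖∑ k ∈ range K, (ZMod.stdAddChar ((k : ZMod M) * x) : ℂ)‖ ^ 2

lemma F_exact (M K m : ℕ) [NeZero M] (hm : 0 < m) (hK : K * m ≤ M) (g : ZMod M → ℂ)
    (hg : ∀ x, g (x + (m : ZMod M)) = g x) : ∑ x, (F M K x : ℂ) * g x = K * ∑ x, g x := by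
  have key : ∀ j : ℤ, |j| < K → j ≠ 0 →
      ∑ x, (ZMod.stdAddChar ((j : ZMod M) * x) : ℂ) * g x = 0 := by
    intro j hj hj0
    set S := ∑ x, (ZMod.stdAddChar ((j : ZMod M) * x) : ℂ) * g x with hS
    have h1 : S = ZMod.stdAddChar ((j : ZMod M) * (m : ZMod M)) * S := by
      conv_lhs => rw [hS, ← Equiv.sum_comp (Equiv.addRight (m : ZMod M))]
      rw [hS, mul_sum]
      refine sum_congr rfl fun x _ => ?_
      simp only [Equiv.coe_addRight, hg, mul_add, AddChar.map_add_eq_mul]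
      ring
    have h2 : (ZMod.stdAddChar ((j : ZMod M) * (m : ZMod M)) : ℂ) ≠ 1 := by
      intro h
      rw [← AddChar.map_zero_eq_one (ZMod.stdAddChar (N := M)),
        ZMod.injective_stdAddChar.eq_iff] at h
      have h' : ((j * m : ℤ) : ZMod M) = 0 := by push_cast; exact h
      rw [ZMod.intCast_zmod_eq_zero_iff_dvd] at h'
      have h3 : (M : ℤ) ≤ |j * m| :=
        Int.le_of_dvd (abs_pos.mpr (mul_ne_zero hj0 (by positivity))) ((dvd_abs _ _).mpr h')
      rw [abs_mul, Nat.abs_cast] at h3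
      have h4 : (K : ℤ) * m ≤ M := by exact_mod_cast hK
      have h5 : (0 : ℤ) < m := by exact_mod_cast hm
      nlinarith
    have h3 : (1 - (ZMod.stdAddChar ((j : ZMod M) * (m : ZMod M)) : ℂ)) * S = 0 := by
      rw [sub_mul, one_mul, ← h1, sub_self]
    rcases mul_eq_zero.mp h3 with h | h
    · exact absurd (sub_eq_zero.mp h).symm h2
    · exact h
  calc ∑ x, (F M K x : ℂ) * g x
      = ∑ x, ∑ k ∈ range K, ∑ k' ∈ range K,
          (ZMod.stdAddChar ((((k : ℤ) - (k' : ℤ) : ℤ) : ZMod M) * x) : ℂ) * g x := by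
        refine sum_congr rfl fun x _ => ?_
        rw [F]
        push_cast
        rw [← Complex.mul_conj', map_sum, sum_mul_sum, sum_mul]
        refine sum_congr rfl fun k _ => ?_
        rw [sum_mul]
        refine sum_congr rfl fun k' _ => ?_
        rw [← AddChar.map_neg_eq_conj, ← AddChar.map_add_eq_mul]
        congr 3
        ring
    _ = ∑ k ∈ range K, ∑ k' ∈ range K, ∑ x,
          (ZMod.stdAddChar ((((k : ℤ) - (k' : ℤ) : ℤ) : ZMod M) * x) : ℂ) * g x := by
        rw [sum_comm]
        refine sum_congr rfl fun k _ => ?_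
        rw [sum_comm]
    _ = ∑ k ∈ range K, ∑ x, g x := by
        refine sum_congr rfl fun k hk => ?_
        rw [sum_eq_single k]
        · simp
        · intro k' hk' hne
          rw [mem_range] at hk hk'
          apply key
          · rw [abs_lt]; omega
          · omega
        · intro h; exact absurd hk h
    _ = _ := by simp

lemma F_lower (N K : ℕ) [NeZero (6 * N * K)] (n : ℕ) (hn : n ≤ N) :
    (K : ℝ) ^ 2 / 4 ≤ F (6 * N * K) K (n : ZMod (6 * N * K)) := by
  have hM : (6 * N * K : ℕ) ≠ 0 := NeZero.ne _
  have hN : 0 < N := by rcases Nat.eq_zero_or_pos N with h | h; simp [h] at hM; exact h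
  have hK : 0 < K := by rcases Nat.eq_zero_or_pos K with h | h; simp [h] at hM; exact h
  have h1 : (K : ℝ) / 2 ≤ ‖∑ k ∈ range K,
      (ZMod.stdAddChar ((k : ZMod (6 * N * K)) * (n : ZMod (6 * N * K))) : ℂ)‖ := by
    refine le_trans ?_ (Complex.re_le_norm _)
    rw [Complex.re_sum]
    calc (K : ℝ) / 2 = ∑ k ∈ range K, (1 / 2 : ℝ) := by simp; ring
      _ ≤ _ := by
        refine sum_le_sum fun k hk => ?_
        rw [mem_range] at hk
        have e : ((k : ZMod (6 * N * K)) * (n : ZMod (6 * N * K)))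
            = (((k * n : ℕ) : ℤ) : ZMod (6 * N * K)) := by push_cast; ring
        rw [e, ZMod.stdAddChar_coe]
        have e2 : 2 * (Real.pi : ℂ) * Complex.I * (((k * n : ℕ) : ℤ) : ℂ) / ((6 * N * K : ℕ) : ℂ)
            = ((2 * Real.pi * (k * n) / (6 * N * K) : ℝ) : ℂ) * Complex.I := by
          push_cast; ring
        rw [e2, Complex.exp_ofReal_mul_I_re, ← Real.cos_pi_div_three]
        have hNr : (0 : ℝ) < N := by exact_mod_cast hN
        have hKr : (0 : ℝ) < K := by exact_mod_cast hK
        have hkn : (k : ℝ) * n ≤ K * N := by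
          have : k * n ≤ K * N := Nat.mul_le_mul hk.le hn
          exact_mod_cast this
        apply Real.cos_le_cos_of_nonneg_of_le_pi
        · positivity
        · linarith [Real.pi_pos]
        · rw [div_le_div_iff₀ (by positivity) (by positivity)]
          nlinarith [Real.pi_pos]
  rw [F]
  calc (K : ℝ) ^ 2 / 4 = ((K : ℝ) / 2) ^ 2 := by ring
    _ ≤ _ := by gcongr

end LS
namespace LS
open Finset ComplexConjugate ArithmeticFunction

open Classical in
noncomputable def A (M d : ℕ) (x : ZMod M) : ℝ := if (x.cast : ZMod d) = 0 then (d : ℝ) else 0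

noncomputable def c (M l : ℕ) (x : ZMod M) : ℝ :=
  ∑ d ∈ l.divisors, (moebius (l / d) : ℝ) * A M d x

lemma A_add (M d m : ℕ) (hd : d ∣ M) (hm : d ∣ m) (x : ZMod M) : A M d (x + (m : ZMod M)) = A M d x := by
  have : ((x + (m : ZMod M)).cast : ZMod d) = x.cast := by
    rw [ZMod.cast_add hd, ZMod.cast_natCast hd, (ZMod.natCast_eq_zero_iff m d).mpr hm, add_zero]
  unfold A
  rw [this]

lemma A_unit (M d : ℕ) (hd : d ∣ M) (u : (ZMod M)ˣ) (x : ZMod M) : A M d (u * x) = A M d x := by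
  have hu : IsUnit ((u : ZMod M).cast : ZMod d) := by
    have := (u.isUnit).map (ZMod.castHom hd (ZMod d))
    simpa using this
  unfold A
  simp only [ZMod.cast_mul hd, hu.mul_right_eq_zero]

lemma c_add (M l m : ℕ) (hl : l ∣ M) (hm : l ∣ m) (x : ZMod M) :
    c M l (x + (m : ZMod M)) = c M l x := by
  unfold c
  refine sum_congr rfl fun d hd => ?_
  have := Nat.dvd_of_mem_divisors hd
  rw [A_add M d m (this.trans hl) (this.trans hm)]

lemma c_unit (M l : ℕ) (hl : l ∣ M) (u : (ZMod M)ˣ) (x : ZMod M) :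
    c M l (u * x) = c M l x := by
  unfold c
  refine sum_congr rfl fun d hd => ?_
  rw [A_unit M d ((Nat.dvd_of_mem_divisors hd).trans hl)]

lemma c_coprime (M l n : ℕ) (hl0 : l ≠ 0) (hl : l ∣ M) (hn : Nat.Coprime l n) :
    c M l (n : ZMod M) = moebius l := by
  unfold c
  rw [sum_eq_single 1]
  · have : ((n : ZMod M).cast : ZMod 1) = 0 := Subsingleton.elim _ _
    simp [A, this]
  · intro d hd h1
    have hdl := Nat.dvd_of_mem_divisors hd
    have : ¬ ((n : ZMod M).cast : ZMod d) = 0 := by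
      rw [ZMod.cast_natCast (hdl.trans hl), ZMod.natCast_eq_zero_iff]
      intro h
      exact h1 (Nat.eq_one_of_dvd_coprimes hn hdl h)
    simp [A, this]
  · intro h; simp [hl0] at h

lemma card_mult (M e : ℕ) (he : e ∣ M) (hM : 0 < M) : (#{n ∈ range M | e ∣ n}) = M / e := by
  obtain ⟨k, rfl⟩ := he
  have he0 : 0 < e := Nat.pos_of_mul_pos_right hM
  rw [Nat.mul_div_cancel_left _ he0]
  have : {n ∈ range (e * k) | e ∣ n} = (range k).image (fun i => e * i) := by
    ext n
    simp only [mem_filter, mem_range, mem_image]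
    constructor
    · rintro ⟨h, i, rfl⟩
      exact ⟨i, Nat.lt_of_mul_lt_mul_left h, rfl⟩
    · rintro ⟨i, hi, rfl⟩
      exact ⟨Nat.mul_lt_mul_of_pos_left hi he0, dvd_mul_right _ _⟩
  rw [this, card_image_of_injective _ (fun a b h => Nat.eq_of_mul_eq_mul_left he0 h), card_range]

lemma sum_zmod (M : ℕ) [NeZero M] (f : ℕ → ℝ) : ∑ x : ZMod M, f x.val = ∑ n ∈ range M, f n := by
  obtain ⟨k, rfl⟩ := Nat.exists_eq_succ_of_ne_zero (NeZero.ne M)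
  exact Fin.sum_univ_eq_sum_range f (k + 1)

lemma sum_AA (M d d' : ℕ) [NeZero M] (hd : d ∣ M) (hd' : d' ∣ M) :
    ∑ x, A M d x * A M d' x = M * (Nat.gcd d d' : ℝ) := by
  have hM : 0 < M := Nat.pos_of_ne_zero (NeZero.ne M)
  have hd0 : 0 < d := Nat.pos_of_dvd_of_pos hd hM
  have hd0' : 0 < d' := Nat.pos_of_dvd_of_pos hd' hM
  have h1 : ∀ x : ZMod M, A M d x * A M d' x
      = (fun n : ℕ => if Nat.lcm d d' ∣ n then (d : ℝ) * d' else 0) x.val := by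
    intro x
    have e : ∀ d : ℕ, ((x.cast : ZMod d) = 0) ↔ d ∣ x.val := by
      intro d
      rw [← ZMod.natCast_val, ZMod.natCast_eq_zero_iff]
    simp only [A, e, Nat.lcm_dvd_iff]
    by_cases ha : d ∣ x.val <;> by_cases hb : d' ∣ x.val <;> simp [ha, hb]
  rw [sum_congr rfl (fun x _ => h1 x),
    sum_zmod M (fun n : ℕ => if Nat.lcm d d' ∣ n then (d : ℝ) * d' else 0), ← sum_filter, sum_const,
    card_mult M _ (Nat.lcm_dvd hd hd') hM, nsmul_eq_mul]
  have h2 : M / Nat.lcm d d' * (d * d') = M * Nat.gcd d d' := by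
    rw [← Nat.gcd_mul_lcm d d', mul_comm (Nat.gcd d d'), ← mul_assoc,
      Nat.div_mul_cancel (Nat.lcm_dvd hd hd')]
  exact_mod_cast h2

lemma gcd_eq (d d' n : ℕ) (hn : n ≠ 0) (hd : d ∣ n) (hd0 : d ≠ 0) : (Nat.gcd d d' : ℝ)
    = ∑ e ∈ n.divisors, (Nat.totient e : ℝ) * (if e ∣ d then 1 else 0) * (if e ∣ d' then 1 else 0) := by
  have h := Nat.sum_totient (Nat.gcd d d')
  rw [← h]
  push_cast
  have : (Nat.gcd d d').divisors = n.divisors.filter (fun e => e ∣ d ∧ e ∣ d') := by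
    ext e
    simp only [Nat.mem_divisors, mem_filter, Nat.dvd_gcd_iff]
    constructor
    · rintro ⟨⟨h1, h2⟩, h3⟩
      exact ⟨⟨h1.trans hd, hn⟩, h1, h2⟩
    · rintro ⟨_, h1, h2⟩
      exact ⟨⟨h1, h2⟩, Nat.gcd_ne_zero_left hd0⟩
  rw [this, sum_filter]
  refine sum_congr rfl fun e _ => ?_
  by_cases h1 : e ∣ d <;> by_cases h2 : e ∣ d' <;> simp [h1, h2]

lemma moeb_sum (l e : ℕ) (hl : l ≠ 0) :
    ∑ d ∈ l.divisors, (moebius (l / d) : ℝ) * (if e ∣ d then 1 else 0) = if l = e then 1 else 0 := by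
  by_cases he : e ∣ l
  · obtain ⟨k, rfl⟩ := he
    have he0 : e ≠ 0 := by rintro rfl; simp at hl
    have hk0 : k ≠ 0 := by rintro rfl; simp at hl
    have h1 : ∑ d ∈ (e * k).divisors, (moebius (e * k / d) : ℝ) * (if e ∣ d then 1 else 0)
        = ∑ f ∈ k.divisors, (moebius (k / f) : ℝ) := by
      simp only [mul_ite, mul_one, mul_zero]
      rw [← sum_filter]
      symm
      refine sum_bij (fun f _ => e * f) ?_ ?_ ?_ ?_
      · intro f hf
        simp only [mem_filter, Nat.mem_divisors] at hf ⊢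
        exact ⟨⟨Nat.mul_dvd_mul_left e hf.1, hl⟩, dvd_mul_right _ _⟩
      · intro a _ b _ h
        exact Nat.eq_of_mul_eq_mul_left (Nat.pos_of_ne_zero he0) h
      · intro b hb
        simp only [mem_filter, Nat.mem_divisors] at hb
        obtain ⟨⟨h1, _⟩, f, rfl⟩ := hb
        exact ⟨f, Nat.mem_divisors.mpr ⟨Nat.dvd_of_mul_dvd_mul_left (Nat.pos_of_ne_zero he0) h1, hk0⟩, rfl⟩
      · intro f hf
        rw [Nat.mul_div_mul_left _ _ (Nat.pos_of_ne_zero he0)]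
    rw [h1]
    have h2 : ∑ f ∈ k.divisors, (moebius (k / f)) = ∑ f ∈ k.divisors, moebius f :=
      Nat.sum_div_divisors k (fun f => moebius f)
    have h3 : ∑ f ∈ k.divisors, (moebius f) = if k = 1 then 1 else 0 := by
      rw [← coe_mul_zeta_apply, moebius_mul_coe_zeta, one_apply]
    have h4 : (∑ f ∈ k.divisors, (moebius (k / f) : ℝ)) = ((if k = 1 then 1 else 0 : ℤ) : ℝ) := by
      rw [← h3, ← h2]; push_cast; rfl
    rw [h4]
    have : (e * k = e) ↔ k = 1 := by
      constructor
      · intro h; exact Nat.eq_of_mul_eq_mul_left (Nat.pos_of_ne_zero he0) (by rw [h, mul_one])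
      · rintro rfl; rw [mul_one]
    by_cases hk : k = 1 <;> simp [this, hk]
  · have : l ≠ e := by rintro rfl; exact he dvd_rfl
    rw [if_neg this]
    refine sum_eq_zero fun d hd => ?_
    rw [if_neg, mul_zero]
    intro h; exact he (h.trans (Nat.dvd_of_mem_divisors hd))

lemma sum_cc (M l l' : ℕ) [NeZero M] (hl : l ∣ M) (hl' : l' ∣ M) :
    ∑ x, c M l x * c M l' x = if l = l' then (M : ℝ) * Nat.totient l else 0 := by
  have hM : M ≠ 0 := NeZero.ne M
  have hl0 : l ≠ 0 := ne_zero_of_dvd_ne_zero hM hl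
  have hl0' : l' ≠ 0 := ne_zero_of_dvd_ne_zero hM hl'
  calc ∑ x, c M l x * c M l' x
      = ∑ d ∈ l.divisors, ∑ d' ∈ l'.divisors, (moebius (l / d) : ℝ) * moebius (l' / d')
          * ∑ x, A M d x * A M d' x := by
        simp only [c, sum_mul_sum]
        rw [sum_comm]
        refine sum_congr rfl fun d _ => ?_
        rw [sum_comm]
        refine sum_congr rfl fun d' _ => ?_
        rw [mul_sum]
        refine sum_congr rfl fun x _ => ?_
        ring
    _ = ∑ d ∈ l.divisors, ∑ d' ∈ l'.divisors, ∑ e ∈ l.divisors, (M : ℝ) * Nat.totient e *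
          (((moebius (l / d) : ℝ) * (if e ∣ d then 1 else 0)) *
            ((moebius (l' / d') : ℝ) * (if e ∣ d' then 1 else 0))) := by
        refine sum_congr rfl fun d hd => sum_congr rfl fun d' hd' => ?_
        have hdl := Nat.dvd_of_mem_divisors hd
        have hdl' := Nat.dvd_of_mem_divisors hd'
        rw [sum_AA M d d' (hdl.trans hl) (hdl'.trans hl'),
          gcd_eq d d' l hl0 hdl (ne_zero_of_dvd_ne_zero hl0 hdl), mul_sum, mul_sum]
        refine sum_congr rfl fun e _ => ?_
        ring
    _ = ∑ e ∈ l.divisors, (M : ℝ) * Nat.totient e *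
          ((∑ d ∈ l.divisors, (moebius (l / d) : ℝ) * (if e ∣ d then 1 else 0)) *
           (∑ d' ∈ l'.divisors, (moebius (l' / d') : ℝ) * (if e ∣ d' then 1 else 0))) := by
        rw [sum_congr rfl (fun d _ => sum_comm), sum_comm]
        refine sum_congr rfl fun e _ => ?_
        rw [sum_mul_sum, mul_sum]
        refine sum_congr rfl fun d _ => ?_
        rw [mul_sum]
    _ = ∑ e ∈ l.divisors, (M : ℝ) * Nat.totient e *
          ((if l = e then 1 else 0) * (if l' = e then 1 else 0)) := by
        refine sum_congr rfl fun e _ => ?_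
        rw [moeb_sum l e hl0, moeb_sum l' e hl0']
    _ = _ := by
        rw [sum_eq_single l]
        · by_cases h : l = l'
          · simp [h]
          · simp [h, Ne.symm h]
        · intro b _ hb
          simp [Ne.symm hb]
        · intro h; simp [hl0] at h

noncomputable def L (z : ℕ) : ℝ := ∑ l ∈ Icc 1 z, (moebius l : ℝ) ^ 2 / l

noncomputable def w (M z : ℕ) (x : ZMod M) : ℝ := ∑ l ∈ Icc 1 z, (moebius l : ℝ) / l * c M l x

lemma w_unit (M z : ℕ) (hz : ∀ l ∈ Icc 1 z, l ∣ M) (u : (ZMod M)ˣ) (x : ZMod M) :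
    w M z (u * x) = w M z x := by
  unfold w
  refine sum_congr rfl fun l hl => ?_
  rw [c_unit M l (hz l hl)]

lemma w_coprime (M z n : ℕ) (hz : ∀ l ∈ Icc 1 z, l ∣ M) (hn : n.Prime) (hzn : z < n) :
    w M z (n : ZMod M) = L z := by
  unfold w L
  refine sum_congr rfl fun l hl => ?_
  have hl2 := mem_Icc.mp hl
  have hco : Nat.Coprime l n :=
    (Nat.coprime_of_lt_prime (by omega) (by omega) hn).symm
  rw [c_coprime M l n (by omega) (hz l hl) hco]
  ring

lemma sum_ww (M z : ℕ) [NeZero M] (hz : ∀ l ∈ Icc 1 z, l ∣ M) :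
    ∑ x, w M z x ^ 2 ≤ M * L z := by
  calc ∑ x, w M z x ^ 2
      = ∑ l ∈ Icc 1 z, ∑ l' ∈ Icc 1 z, ((moebius l : ℝ) / l * ((moebius l' : ℝ) / l')) *
          ∑ x, c M l x * c M l' x := by
        simp only [w, sq, sum_mul_sum]
        rw [sum_comm]
        refine sum_congr rfl fun d _ => ?_
        rw [sum_comm]
        refine sum_congr rfl fun d' _ => ?_
        rw [mul_sum]
        refine sum_congr rfl fun x _ => ?_
        ring
    _ = ∑ l ∈ Icc 1 z, ((moebius l : ℝ) / l * ((moebius l : ℝ) / l)) * (M * Nat.totient l) := by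
        refine sum_congr rfl fun l hl => ?_
        rw [sum_eq_single l]
        · rw [sum_cc M l l (hz l hl) (hz l hl), if_pos rfl]
        · intro b hb hne
          rw [sum_cc M l b (hz l hl) (hz b hb), if_neg hne.symm, mul_zero]
        · intro h; exact absurd hl h
    _ ≤ _ := by
        rw [L, mul_sum]
        refine sum_le_sum fun l hl => ?_
        have hl2 : 0 < l := (mem_Icc.mp hl).1
        have h1 : (Nat.totient l : ℝ) ≤ l := by exact_mod_cast Nat.totient_le l
        have h2 : (0 : ℝ) < l := by exact_mod_cast hl2
        calc ((moebius l : ℝ) / l * ((moebius l : ℝ) / l)) * (M * Nat.totient l)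
            ≤ ((moebius l : ℝ) / l * ((moebius l : ℝ) / l)) * (M * l) := by
              gcongr
              exact mul_self_nonneg _
          _ = _ := by field_simp

lemma sum_inv_sq (z : ℕ) : ∑ b ∈ Icc 1 z, (1 : ℝ) / (b : ℝ) ^ 2 ≤ 2 := by
  have h : ∀ z : ℕ, 1 ≤ z → ∑ b ∈ Icc 1 z, (1 : ℝ) / (b : ℝ) ^ 2 ≤ 2 - 1 / z := by
    intro z hz
    induction z, hz using Nat.le_induction with
    | base => norm_num
    | succ n hn ih =>
      rw [sum_Icc_succ_top (by omega)]
      have hn0 : (0 : ℝ) < n := by exact_mod_cast hn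
      have : (1 : ℝ) / ((n + 1 : ℕ) : ℝ) ^ 2 ≤ 1 / n - 1 / ((n + 1 : ℕ) : ℝ) := by
        push_cast
        rw [div_sub_div _ _ hn0.ne' (by positivity), div_le_div_iff₀ (by positivity) (by positivity)]
        nlinarith
      linarith
  rcases Nat.eq_zero_or_pos z with h0 | h0
  · simp [h0]
  · have : (0 : ℝ) ≤ 1 / z := by positivity
    linarith [h z h0]

lemma L_lower (z : ℕ) : Real.log (z + 1 : ℕ) ≤ 2 * L z := by
  have h0 : ((harmonic z : ℚ) : ℝ) = ∑ n ∈ Icc 1 z, (1 : ℝ) / n := by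
    rw [harmonic_eq_sum_Icc]; push_cast; simp
  have h1 : Real.log (z + 1 : ℕ) ≤ ∑ n ∈ Icc 1 z, (1 : ℝ) / n := by
    rw [← h0]; exact log_add_one_le_harmonic z
  refine h1.trans ?_
  have hL0 : 0 ≤ L z := by unfold L; positivity
  choose a b hab hsq using fun n : ℕ => Nat.sq_mul_squarefree n
  set g : ℕ × ℕ → ℝ := fun p => ((moebius p.1 : ℝ) ^ 2 / p.1) * (1 / (p.2 : ℝ) ^ 2) with hg
  have hg0 : ∀ p, 0 ≤ g p := fun p => by rw [hg]; positivity
  calc ∑ n ∈ Icc 1 z, (1 : ℝ) / n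
      = ∑ n ∈ Icc 1 z, g (a n, b n) := by
        refine sum_congr rfl fun n _ => ?_
        have h2 : ((moebius (a n) : ℝ)) ^ 2 = 1 := by
          have := moebius_sq_eq_one_of_squarefree (hsq n)
          exact_mod_cast this
        have h3 : (n : ℝ) = (b n : ℝ) ^ 2 * a n := by exact_mod_cast (hab n).symm
        simp only [hg, h2]
        rw [div_mul_div_comm, one_mul, h3, mul_comm]
    _ = ∑ p ∈ (Icc 1 z).image (fun n => (a n, b n)), g p := by
        rw [sum_image]
        intro n _ m _ h
        simp only [Prod.mk.injEq] at h
        rw [← hab n, ← hab m, h.1, h.2]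
    _ ≤ ∑ p ∈ Icc 1 z ×ˢ Icc 1 z, g p := by
        refine sum_le_sum_of_subset_of_nonneg ?_ fun p _ _ => hg0 p
        intro p hp
        obtain ⟨n, hn, rfl⟩ := mem_image.mp hp
        have hn2 := mem_Icc.mp hn
        have h4 := hab n
        have ha : a n ≠ 0 := by intro h; rw [h] at h4; omega
        have hb : b n ≠ 0 := by intro h; rw [h] at h4; simp at h4; omega
        simp only [mem_product, mem_Icc]
        have h5 : a n ≤ n := Nat.le_of_dvd (by omega) (Dvd.intro_left _ h4)
        have h6 : b n ≤ n := Nat.le_of_dvd (by omega) ⟨b n * a n, by nlinarith⟩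
        omega
    _ = (∑ l ∈ Icc 1 z, (moebius l : ℝ) ^ 2 / l) * ∑ b ∈ Icc 1 z, (1 : ℝ) / (b : ℝ) ^ 2 := by
        rw [sum_product, sum_mul_sum]
    _ ≤ L z * 2 := by
        change L z * _ ≤ _
        exact mul_le_mul_of_nonneg_left (sum_inv_sq z) hL0
    _ = _ := by ring

end LS
namespace LS
open Finset ComplexConjugate ArithmeticFunction

lemma exact_w (M K z m : ℕ) [NeZero M] (hz : ∀ l ∈ Icc 1 z, l ∣ M) (hm : 0 < m)
    (hK : K * (z * z * m) ≤ M) (h : ZMod M → ℂ) (hh : ∀ x (t : ℕ), m ∣ t → h (x + (t : ZMod M)) = h x) :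
    ∑ x, (F M K x : ℂ) * ((w M z x : ℂ) ^ 2 * h x) = K * ∑ x, (w M z x : ℂ) ^ 2 * h x := by
  have e : ∀ φ : ZMod M → ℂ, ∑ x, φ x * ((w M z x : ℂ) ^ 2 * h x)
      = ∑ l ∈ Icc 1 z, ∑ l' ∈ Icc 1 z, ((moebius l : ℂ) / l * ((moebius l' : ℂ) / l')) *
          ∑ x, φ x * ((c M l x : ℂ) * (c M l' x : ℂ) * h x) := by
    intro φ
    simp only [w, sq]
    push_cast
    simp only [sum_mul, mul_sum]
    rw [sum_comm]
    refine sum_congr rfl fun d _ => ?_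
    rw [sum_comm]
    refine sum_congr rfl fun d' _ => ?_
    refine sum_congr rfl fun x _ => ?_
    ring
  have e1 := e (fun _ => 1)
  simp only [one_mul] at e1
  rw [e, e1, mul_sum]
  refine sum_congr rfl fun l hl => ?_
  rw [mul_sum]
  refine sum_congr rfl fun l' hl' => ?_
  have hl2 := mem_Icc.mp hl
  have hl2' := mem_Icc.mp hl'
  rw [F_exact M K (l * l' * m) (by have := hl2.1; have := hl2'.1; positivity)]
  · ring
  · refine le_trans ?_ hK
    have := Nat.mul_le_mul hl2.2 hl2'.2
    gcongr
  · intro x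
    rw [c_add M l _ (hz l hl) ⟨l' * m, by ring⟩, c_add M l' _ (hz l' hl') ⟨l * m, by ring⟩,
      hh x _ ⟨l * l', by ring⟩]

lemma exists_unit (M r r' : ℕ) [NeZero M] (hr : r ∣ M) (hr' : r' ∣ M)
    (χ : DirichletCharacter ℂ r) (χ' : DirichletCharacter ℂ r') (hχ : χ.IsPrimitive)
    (hχ' : χ'.IsPrimitive)
    (hne : (⟨r, χ⟩ : Σ r, DirichletCharacter ℂ r) ≠ ⟨r', χ'⟩) :
    ∃ u : (ZMod M)ˣ, χ ((u : ZMod M).cast) * conj (χ' ((u : ZMod M).cast)) ≠ 1 := by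
  by_contra hcon
  push Not at hcon
  have h1 : DirichletCharacter.changeLevel hr χ = DirichletCharacter.changeLevel hr' χ' := by
    refine MulChar.ext fun u => ?_
    rw [DirichletCharacter.changeLevel_eq_cast_of_dvd, DirichletCharacter.changeLevel_eq_cast_of_dvd]
    have hu : IsUnit ((u : ZMod M).cast : ZMod r') := by
      have := (u.isUnit).map (ZMod.castHom hr' (ZMod r'))
      simpa using this
    have hn : ‖χ' ((u : ZMod M).cast)‖ = 1 := by
      have := χ'.unit_norm_eq_one hu.unit
      simpa using this
    have h2 := hcon u
    have h3 : conj (χ' ((u : ZMod M).cast)) * χ' ((u : ZMod M).cast) = 1 := by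
      rw [Complex.conj_mul', hn]; simp
    calc χ ((u : ZMod M).cast) = χ ((u : ZMod M).cast) *
          (conj (χ' ((u : ZMod M).cast)) * χ' ((u : ZMod M).cast)) := by rw [h3, mul_one]
      _ = _ := by rw [← mul_assoc, h2, one_mul]
  have h2 : r = r' := by
    rw [← hχ, ← hχ', ← DirichletCharacter.conductor_changeLevel χ hr, h1,
      DirichletCharacter.conductor_changeLevel]
  subst h2
  exact hne (by rw [DirichletCharacter.changeLevel_injective hr h1])

theorem family (N z : ℕ) (hN : 1 ≤ N) (hzN : z ≤ N) {ι : Type*} [Fintype ι]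
    [DecidableEq ι] (r : ι → ℕ) (χ : ∀ i, DirichletCharacter ℂ (r i))
    (hprim : ∀ i, (χ i).IsPrimitive) (hr1 : ∀ i, 1 ≤ r i) (hrN : ∀ i, r i ≤ N)
    (hinj : ∀ i j, i ≠ j → (⟨r i, χ i⟩ : Σ r, DirichletCharacter ℂ r) ≠ ⟨r j, χ j⟩)
    (hsize : ∀ i j, z * z * (r i * r j) ≤ 6 * N) (hL : 0 < L z) (P : Finset ℕ)
    (hP : ∀ p ∈ P, p.Prime ∧ z < p ∧ p ≤ N) :
    ∑ i, ‖∑ p ∈ P, χ i (p : ZMod (r i))‖ ^ 2 ≤ 24 * N / L z * #P := by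
  set K := N.factorial with hKdef
  have hK : 0 < K := Nat.factorial_pos N
  have hKN : N ≤ K := Nat.self_le_factorial N
  have : NeZero (6 * N * K) := ⟨by positivity⟩
  set M := 6 * N * K with hM
  have hdvd : ∀ d, 1 ≤ d → d ≤ N → d ∣ M := fun d h1 h2 =>
    (Nat.dvd_factorial h1 h2).trans (dvd_mul_left _ _)
  have hz : ∀ l ∈ Icc 1 z, l ∣ M := fun l hl => by
    rw [mem_Icc] at hl; exact hdvd l hl.1 (hl.2.trans hzN)
  have hrM : ∀ i, r i ∣ M := fun i => hdvd _ (hr1 i) (hrN i)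
  have hKr : (0 : ℝ) < K := by exact_mod_cast hK
  set v : ι → ZMod M → ℂ := fun i x => χ i (x.cast) with hv
  set C : ℝ := 4 / (K ^ 2 * L z ^ 2) with hC
  have hC0 : 0 ≤ C := by rw [hC]; positivity
  set G : ZMod M → ℝ := fun x => C * (F M K x * w M z x ^ 2) with hG
  have hex : ∀ i j, ∑ x, (G x : ℂ) * (v i x * conj (v j x))
      = C * (K * ∑ x, (w M z x : ℂ) ^ 2 * (v i x * conj (v j x))) := by
    intro i j
    rw [← exact_w M K z (r i * r j) hz (Nat.mul_pos (hr1 i) (hr1 j)), mul_sum]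
    · refine sum_congr rfl fun x _ => ?_
      simp only [hG]; push_cast; ring
    · rw [hM, mul_comm]; exact Nat.mul_le_mul_right _ (hsize i j)
    · intro x t ht
      have h1 : r i ∣ t := (dvd_mul_right _ _).trans ht
      have h2 : r j ∣ t := (dvd_mul_left _ _).trans ht
      simp only [hv]
      rw [ZMod.cast_add (hrM i), ZMod.cast_add (hrM j), ZMod.cast_natCast (hrM i),
        ZMod.cast_natCast (hrM j), (ZMod.natCast_eq_zero_iff t _).mpr h1,
        (ZMod.natCast_eq_zero_iff t _).mpr h2, add_zero, add_zero]
  have hcastinj : Set.InjOn (fun p : ℕ => (p : ZMod M)) P := by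
    intro p hp q hq h
    have hp2 := (hP p hp).2.2
    have hq2 := (hP q hq).2.2
    have hlt : N < M := by rw [hM]; nlinarith
    have h' : (p : ZMod M) = (q : ZMod M) := h
    rw [ZMod.natCast_eq_natCast_iff'] at h'
    rwa [Nat.mod_eq_of_lt (by omega), Nat.mod_eq_of_lt (by omega)] at h'
  have main := bessel v G (fun x => by rw [hG]; have : 0 ≤ F M K x := sq_nonneg _; positivity)
    (24 * N / L z) (by positivity) ?_ ?_ (P.image (fun p : ℕ => (p : ZMod M))) ?_
  · rw [card_image_of_injOn hcastinj] at main
    refine le_trans (le_of_eq ?_) main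
    refine sum_congr rfl fun i _ => ?_
    rw [sum_image hcastinj]
    congr 2
    refine sum_congr rfl fun p _ => ?_
    simp only [hv]
    rw [ZMod.cast_natCast (hrM i)]
  · intro i j hij
    rw [hex]
    obtain ⟨u, hu⟩ := exists_unit M (r i) (r j) (hrM i) (hrM j) (χ i) (χ j) (hprim i) (hprim j)
      (hinj i j hij)
    set S := ∑ x, (w M z x : ℂ) ^ 2 * (v i x * conj (v j x)) with hS
    set η := χ i ((u : ZMod M).cast) * conj (χ j ((u : ZMod M).cast)) with hη
    have h1 : S = η * S := by
      conv_lhs => rw [hS, ← Equiv.sum_comp (Units.mulLeft u)]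
      rw [hS, mul_sum]
      refine sum_congr rfl fun x _ => ?_
      simp only [Units.mulLeft_apply, w_unit M z hz, hv]
      rw [ZMod.cast_mul (hrM i), ZMod.cast_mul (hrM j), map_mul, map_mul, map_mul, hη]
      ring
    have h3 : (1 - η) * S = 0 := by rw [sub_mul, one_mul, ← h1, sub_self]
    rcases mul_eq_zero.mp h3 with h | h
    · exact absurd (sub_eq_zero.mp h).symm hu
    · rw [h]; simp
  · intro i
    have h1 : ∑ x, G x * ‖v i x‖ ^ 2 = C * (K * ∑ x, w M z x ^ 2 * ‖v i x‖ ^ 2) := by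
      have := hex i i
      simp only [Complex.mul_conj'] at this
      exact_mod_cast this
    have h2 : ∑ x, w M z x ^ 2 * ‖v i x‖ ^ 2 ≤ ∑ x, w M z x ^ 2 := by
      refine sum_le_sum fun x _ => ?_
      have h3 : ‖v i x‖ ≤ 1 := (χ i).norm_le_one _
      have h4 : ‖v i x‖ ^ 2 ≤ 1 := pow_le_one₀ (norm_nonneg _) h3
      nlinarith [sq_nonneg (w M z x)]
    have h3 := h2.trans (sum_ww M z hz)
    rw [h1]
    calc C * (K * ∑ x, w M z x ^ 2 * ‖v i x‖ ^ 2) ≤ C * (K * (M * L z)) := by gcongr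
      _ = 24 * N / L z := by
        rw [hC, hM]; push_cast; field_simp; ring
  · intro x hx
    obtain ⟨p, hp, rfl⟩ := mem_image.mp hx
    obtain ⟨h1, h2, h3⟩ := hP p hp
    simp only [hG]
    rw [w_coprime M z p hz h1 h2]
    have h4 := F_lower N K p h3
    calc 1 = C * ((K : ℝ) ^ 2 / 4 * L z ^ 2) := by rw [hC]; field_simp
      _ ≤ _ := by gcongr

lemma log_le_two_sqrt (N : ℕ) (hN : 2 ≤ N) : Real.log N ≤ 2 * √N := by
  have hN0 : (0 : ℝ) < N := by positivity
  have h1 : Real.log (√N) ≤ √N - 1 := Real.log_le_sub_one_of_pos (Real.sqrt_pos.mpr hN0)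
  rw [Real.log_sqrt hN0.le] at h1
  linarith

lemma prime_bound (N : ℕ) (hN : 2 ≤ N) :
    (#((range (N + 1)).filter Nat.Prime) : ℝ) ≤ 8 * N / Real.log N := by
  have hN1 : (1 : ℝ) < N := by exact_mod_cast hN
  have h := Chebyshev.pi_le_log4_mul_div hN1
  rw [Nat.floor_natCast, Nat.primeCounting, Nat.primeCounting', Nat.count_eq_card_filter_range] at h
  refine h.trans ?_
  have hl : 0 < Real.log N := Real.log_pos hN1
  have hs := log_le_two_sqrt N hN
  have h4 : Real.log 4 ≤ 3 := by
    have := Real.log_le_sub_one_of_pos (show (0 : ℝ) < 4 by norm_num)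
    linarith
  rw [Real.log_sqrt (by positivity)]
  have hsq : √(N : ℝ) * √N = N := Real.mul_self_sqrt (by positivity)
  have e1 : Real.log 4 * N / (Real.log N / 2) ≤ 6 * N / Real.log N := by
    rw [div_div_eq_mul_div]
    exact div_le_div_of_nonneg_right (by nlinarith) hl.le
  have e2 : √(N : ℝ) ≤ 2 * N / Real.log N := by
    rw [le_div_iff₀ hl]
    nlinarith [Real.sqrt_nonneg (N : ℝ)]
  calc _ ≤ 6 * N / Real.log N + 2 * N / Real.log N := add_le_add e1 e2
    _ = _ := by ring

end LS
namespace LS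
open Finset ComplexConjugate

theorem bound (ε : ℝ) (hε : 0 < ε) (hε2 : ε ≤ 1 / 2) (N : ℕ) (hN : 2 ≤ N) {ι : Type*} [Fintype ι]
    (r : ι → ℕ) (χ : ∀ i, DirichletCharacter ℂ (r i))
    (hprim : ∀ i, (χ i).IsPrimitive) (hr1 : ∀ i, 1 ≤ r i)
    (hrR : ∀ i, (r i : ℝ) ≤ (N : ℝ) ^ ((1 : ℝ) / 2 - ε))
    (hinj : ∀ i j, i ≠ j → (⟨r i, χ i⟩ : Σ r, DirichletCharacter ℂ r) ≠ ⟨r j, χ j⟩)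
    (hcard : (Fintype.card ι : ℝ) ≤ ((N : ℝ) ^ ((1 : ℝ) / 2 - ε)) ^ 2) :
    ∑ i, ‖∑ q ∈ (Finset.range (N + 1)).filter Nat.Prime, χ i (q : ZMod (r i))‖ ^ 2
      ≤ (8 + 800 / ε) * (N : ℝ) ^ 2 / (Real.log N) ^ 2 := by
  classical
  have hN1 : (1 : ℝ) < N := by exact_mod_cast hN
  have hN0 : (0 : ℝ) < N := by positivity
  set z : ℕ := ⌊(N : ℝ) ^ ε⌋₊ with hz
  have hzle : (z : ℝ) ≤ (N : ℝ) ^ ε := Nat.floor_le (by positivity)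
  have hzlt : (N : ℝ) ^ ε < (z + 1 : ℕ) := by push_cast; exact Nat.lt_floor_add_one _
  set R : ℝ := (N : ℝ) ^ ((1 : ℝ) / 2 - ε) with hR
  have hR0 : 0 < R := by positivity
  have hRz : ((N : ℝ) ^ ε) ^ 2 * R ^ 2 = N := by
    rw [← mul_pow, hR, ← Real.rpow_add hN0, ← Real.rpow_natCast, ← Real.rpow_mul hN0.le]
    norm_num
  have hzR : (z : ℝ) ^ 2 * R ^ 2 ≤ N := by rw [← hRz]; gcongr
  have hlog : 0 < Real.log N := Real.log_pos hN1
  have hLl : ε * Real.log N ≤ 2 * L z := by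
    refine le_trans ?_ (L_lower z)
    rw [← Real.log_rpow hN0]
    exact Real.log_le_log (by positivity) hzlt.le
  have hL : 0 < L z := by
    have : 0 < ε * Real.log N := by positivity
    linarith
  have hself : ∀ a : ℝ, a ≤ 1 → (N : ℝ) ^ a ≤ N := fun a ha => by
    conv_rhs => rw [← Real.rpow_one (N : ℝ)]
    exact Real.rpow_le_rpow_of_exponent_le hN1.le ha
  have hzN : z ≤ N := by
    have : (z : ℝ) ≤ N := hzle.trans (hself _ (by linarith))
    exact_mod_cast this
  have hrN : ∀ i, r i ≤ N := fun i => by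
    have : (r i : ℝ) ≤ N := (hrR i).trans (hself _ (by linarith))
    exact_mod_cast this
  set Q := (Finset.range (N + 1)).filter Nat.Prime with hQ
  have hbig := family N z (by omega) hzN r χ hprim hr1 hrN hinj (by
    intro i j
    have h1 : (z : ℝ) * z * (r i * r j) ≤ N := by
      calc (z : ℝ) * z * (r i * r j) ≤ z * z * (R * R) := by
            gcongr
            · exact hrR i
            · exact hrR j
        _ = z ^ 2 * R ^ 2 := by ring
        _ ≤ N := hzR
    have h2 : z * z * (r i * r j) ≤ N := by exact_mod_cast h1
    omega) hL (Q.filter (fun p => z < p)) (by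
    intro p hp
    simp only [hQ, mem_filter, mem_range] at hp
    exact ⟨hp.1.2, hp.2, by omega⟩)
  have hsmall : ∀ i, ‖∑ q ∈ Q.filter (fun p => ¬ z < p), χ i (q : ZMod (r i))‖ ≤ z := by
    intro i
    refine (norm_sum_le _ _).trans ?_
    calc _ ≤ ∑ q ∈ Q.filter (fun p => ¬ z < p), (1 : ℝ) :=
          sum_le_sum fun q _ => (χ i).norm_le_one _
      _ = #(Q.filter (fun p => ¬ z < p)) := by simp
      _ ≤ #(Icc 1 z) := by
        norm_cast
        refine card_le_card fun q hq => ?_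
        simp only [hQ, mem_filter, mem_range] at hq
        rw [mem_Icc]
        exact ⟨hq.1.2.one_le, by omega⟩
      _ = z := by simp
  have hQP : (#(Q.filter (fun p => z < p)) : ℝ) ≤ 8 * N / Real.log N := by
    refine le_trans ?_ (prime_bound N hN)
    exact_mod_cast card_le_card (filter_subset _ _)
  have hsplit : ∀ i, ‖∑ q ∈ Q, χ i (q : ZMod (r i))‖ ^ 2
      ≤ 2 * ‖∑ q ∈ Q.filter (fun p => z < p), χ i (q : ZMod (r i))‖ ^ 2 + 2 * (z : ℝ) ^ 2 := by
    intro i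
    rw [← sum_filter_add_sum_filter_not Q (fun p => z < p)]
    have h1 := norm_add_le (∑ q ∈ Q.filter (fun p => z < p), χ i (q : ZMod (r i)))
      (∑ q ∈ Q.filter (fun p => ¬ z < p), χ i (q : ZMod (r i)))
    have h2 := hsmall i
    set a := ‖∑ q ∈ Q.filter (fun p => z < p), χ i (q : ZMod (r i))‖
    set b := ‖∑ q ∈ Q.filter (fun p => ¬ z < p), χ i (q : ZMod (r i))‖
    have ha : 0 ≤ a := norm_nonneg _
    have hb : 0 ≤ b := norm_nonneg _
    calc _ ≤ (a + z) ^ 2 := by gcongr; linarith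
      _ ≤ _ := by nlinarith [sq_nonneg (a - z)]
  have hloglog : Real.log N ^ 2 ≤ 4 * N := by
    have h1 := log_le_two_sqrt N hN
    calc Real.log N ^ 2 ≤ (2 * √N) ^ 2 := by gcongr
      _ = _ := by rw [mul_pow, Real.sq_sqrt hN0.le]; norm_num
  calc ∑ i, ‖∑ q ∈ Q, χ i (q : ZMod (r i))‖ ^ 2
      ≤ ∑ i, (2 * ‖∑ q ∈ Q.filter (fun p => z < p), χ i (q : ZMod (r i))‖ ^ 2 + 2 * (z : ℝ) ^ 2) :=
        sum_le_sum fun i _ => hsplit i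
    _ = 2 * ∑ i, ‖∑ q ∈ Q.filter (fun p => z < p), χ i (q : ZMod (r i))‖ ^ 2
          + 2 * (Fintype.card ι * (z : ℝ) ^ 2) := by
        rw [sum_add_distrib, ← mul_sum]
        simp
        ring
    _ ≤ 2 * (24 * N / (ε * Real.log N / 2) * (8 * N / Real.log N)) + 2 * N := by
        gcongr
        · refine hbig.trans ?_
          gcongr
          linarith
        · calc (Fintype.card ι : ℝ) * (z : ℝ) ^ 2 ≤ R ^ 2 * (z : ℝ) ^ 2 := by gcongr
            _ ≤ (N : ℝ) := by linarith
    _ ≤ (800 / ε) * (N : ℝ) ^ 2 / (Real.log N) ^ 2 + 8 * (N : ℝ) ^ 2 / (Real.log N) ^ 2 := by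
        apply add_le_add
        · have : 2 * (24 * N / (ε * Real.log N / 2) * (8 * N / Real.log N))
              = (768 / ε) * (N : ℝ) ^ 2 / (Real.log N) ^ 2 := by field_simp; norm_num
          rw [this]
          gcongr
          norm_num
        · rw [le_div_iff₀ (by positivity)]
          nlinarith
    _ = _ := by ring

end LS

open Classical in
/-- Large-sieve bound for character sums over primes:
`∑_{r ≤ N^{1/2-ε}} ∑_{χ mod r primitive} |∑_{q ≤ N prime} χ(q)|² ≪_ε N²/(log N)²`. -/
theorem stmt_18 (ε : ℝ) (hε : 0 < ε) :
    ∃ K : ℝ, 0 < K ∧ ∀ N : ℕ, 2 ≤ N →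
      (∑ r ∈ (Finset.Icc 1 N).filter (fun (r : ℕ) => (r : ℝ) ≤ (N : ℝ) ^ ((1 : ℝ) / 2 - ε)),
        ∑' χ : {χ : DirichletCharacter ℂ r // χ.IsPrimitive},
          ‖∑ q ∈ (Finset.range (N + 1)).filter Nat.Prime,
              (χ : DirichletCharacter ℂ r) (q : ZMod r)‖ ^ 2)
      ≤ K * (N : ℝ) ^ 2 / (Real.log N) ^ 2 := by
  refine ⟨8 + 800 / ε, by positivity, fun N hN => ?_⟩
  have hN1 : (1 : ℝ) < N := by exact_mod_cast hN
  set RS := (Finset.Icc 1 N).filter (fun (r : ℕ) => (r : ℝ) ≤ (N : ℝ) ^ ((1 : ℝ) / 2 - ε)) with hRS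
  have hmem : ∀ r ∈ RS, 1 ≤ r ∧ (r : ℝ) ≤ (N : ℝ) ^ ((1 : ℝ) / 2 - ε) := by
    intro r hr
    rw [hRS, Finset.mem_filter, Finset.mem_Icc] at hr
    exact ⟨hr.1.1, hr.2⟩
  by_cases hε2 : ε ≤ 1 / 2
  · have hne : ∀ r : RS, NeZero (r : ℕ) := fun r => ⟨by have := (hmem r r.2).1; omega⟩
    have hfin : ∀ r : RS, Finite {χ : DirichletCharacter ℂ (r : ℕ) // χ.IsPrimitive} := fun r => by
      have := hne r
      infer_instance
    have hft : ∀ r : RS, Fintype {χ : DirichletCharacter ℂ (r : ℕ) // χ.IsPrimitive} := fun r =>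
      Fintype.ofFinite _
    have hb := LS.bound ε hε hε2 N hN
      (ι := Σ r : RS, {χ : DirichletCharacter ℂ (r : ℕ) // χ.IsPrimitive})
      (fun i => (i.1 : ℕ)) (fun i => i.2.1) (fun i => i.2.2) (fun i => (hmem _ i.1.2).1)
      (fun i => (hmem _ i.1.2).2) ?_ ?_
    · refine le_trans (le_of_eq ?_) hb
      rw [Fintype.sum_sigma, ← Finset.sum_coe_sort RS]
      refine Finset.sum_congr rfl fun r _ => ?_
      rw [tsum_fintype]
    · rintro ⟨⟨r, hr⟩, χ, hχ⟩ ⟨⟨r', hr'⟩, χ', hχ'⟩ hij h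
      apply hij
      simp only [Sigma.mk.injEq] at h
      obtain ⟨h1, h2⟩ := h
      subst h1
      have h3 := eq_of_heq h2
      subst h3
      rfl
    · set R := (N : ℝ) ^ ((1 : ℝ) / 2 - ε) with hR
      have hR0 : 0 ≤ R := by positivity
      rw [Fintype.card_sigma]
      push_cast
      have h1 : ∀ r : RS, (Fintype.card {χ : DirichletCharacter ℂ (r : ℕ) // χ.IsPrimitive} : ℝ) ≤ R := by
        intro r
        have := hne r
        refine le_trans ?_ (hmem r r.2).2
        have h2 : Nat.card {χ : DirichletCharacter ℂ (r : ℕ) // χ.IsPrimitive}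
            ≤ Nat.card (DirichletCharacter ℂ (r : ℕ)) :=
          Nat.card_le_card_of_injective _ Subtype.val_injective
        rw [DirichletCharacter.card_eq_totient_of_hasEnoughRootsOfUnity, Nat.card_eq_fintype_card] at h2
        exact_mod_cast h2.trans (Nat.totient_le _)
      calc _ ≤ ∑ r : RS, R := Finset.sum_le_sum fun r _ => h1 r
        _ = RS.card * R := by simp
        _ ≤ R * R := by
          gcongr
          have h3 : RS ⊆ Finset.Icc 1 ⌊R⌋₊ := by
            intro r hr
            rw [Finset.mem_Icc]
            exact ⟨(hmem r hr).1, Nat.le_floor (hmem r hr).2⟩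
          have h4 := Finset.card_le_card h3
          rw [Nat.card_Icc, Nat.add_sub_cancel] at h4
          calc (RS.card : ℝ) ≤ (⌊R⌋₊ : ℝ) := by exact_mod_cast h4
            _ ≤ R := Nat.floor_le hR0
        _ = R ^ 2 := by ring
  · have hempty : RS = ∅ := by
      rw [Finset.eq_empty_iff_forall_notMem]
      intro r hr
      obtain ⟨h1, h2⟩ := hmem r hr
      have h3 : (N : ℝ) ^ ((1 : ℝ) / 2 - ε) < 1 :=
        Real.rpow_lt_one_of_one_lt_of_neg hN1 (by linarith)
      have h4 : (1 : ℝ) ≤ r := by exact_mod_cast h1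
      linarith
    rw [hempty, Finset.sum_empty]
    positivity
end
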